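/- Let p > 1 be a real number and for each l ∈ ℕ let λ_{1,l}, …, λ_{2l+1,l} be real numbers with ∑_{k=1}^{2l+1} λ_{k,l} = −1. If the family (|λ_{k,l}|^{2p})_{l,k} is summable, then ∑_{l=0}^∞ ∑_{k=1}^{2l+1} |λ_{k,l}|^{2p} ≥ ∑_{l=0}^∞ (2l+1)^{1−2p}, and equality holds if and only if λ_{k,l} = −1/(2l+1) for all k and l. -/

import Mathlib

open Real Filter Topology

/-!
Strict convexity of `x ↦ ‖x‖ ^ q` makes the constant family the unique minimiser of
`∑ ‖f i‖ ^ q` among families of `n` vectors with prescribed sum `S`, and its value there is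
`n ^ (1 - q) * ‖S‖ ^ q`. Applied to each level of a summable family, and summed, this gives the
bound; since every level satisfies it, the sums agree only if equality holds at every level.
The eigenvalues of order `l` are the case `n = 2 * l + 1`, `S = -1`, `q = 2 * p`.
-/

theorem strictConvexOn_norm_rpow {E : Type*} [NormedAddCommGroup E] [NormedSpace ℝ E]
    [StrictConvexSpace ℝ E] {q : ℝ} (hq : 1 < q) :
    StrictConvexOn ℝ Set.univ fun x : E => ‖x‖ ^ q := by
  have hq₀ : 0 < q := one_pos.trans hq
  refine ⟨convex_univ, fun x _ y _ hxy a b ha hb hab => ?_⟩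
  rcases eq_or_ne ‖x‖ ‖y‖ with hnorm | hnorm
  -- On a sphere, strictness comes from the strict convexity of the ball.
  · calc ‖a • x + b • y‖ ^ q < ‖y‖ ^ q :=
          rpow_lt_rpow (norm_nonneg _) (norm_combo_lt_of_ne hnorm.le le_rfl hxy ha hb hab) hq₀
      _ = a • ‖x‖ ^ q + b • ‖y‖ ^ q := by rw [hnorm, ← add_smul, hab, one_smul]
  · have hnorm_combo : ‖a • x + b • y‖ ≤ a • ‖x‖ + b • ‖y‖ :=
      convexOn_univ_norm.2 (Set.mem_univ x) (Set.mem_univ y) ha.le hb.le hab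
    calc ‖a • x + b • y‖ ^ q ≤ (a • ‖x‖ + b • ‖y‖) ^ q :=
          rpow_le_rpow (norm_nonneg _) hnorm_combo hq₀.le
      _ < a • ‖x‖ ^ q + b • ‖y‖ ^ q :=
          (strictConvexOn_rpow hq).2 (norm_nonneg x) (norm_nonneg y) hnorm ha hb hab

theorem card_rpow_mul_norm_sum_rpow_le {ι E : Type*} [SeminormedAddCommGroup E] {q : ℝ}
    (hq : 1 ≤ q) {s : Finset ι} (hs : s.Nonempty) (f : ι → E) :
    (s.card : ℝ) ^ (1 - q) * ‖∑ i ∈ s, f i‖ ^ q ≤ ∑ i ∈ s, ‖f i‖ ^ q := by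
  have hcard : (0 : ℝ) < s.card := mod_cast hs.card_pos
  calc (s.card : ℝ) ^ (1 - q) * ‖∑ i ∈ s, f i‖ ^ q
      ≤ (s.card : ℝ) ^ (1 - q) * (∑ i ∈ s, ‖f i‖) ^ q := by gcongr; exact norm_sum_le s f
    _ ≤ (s.card : ℝ) ^ (1 - q) * ((s.card : ℝ) ^ (q - 1) * ∑ i ∈ s, ‖f i‖ ^ q) := by
        gcongr
        exact rpow_sum_le_const_mul_sum_rpow_of_nonneg s hq fun i _ => norm_nonneg (f i)
    _ = ∑ i ∈ s, ‖f i‖ ^ q := by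
        rw [← mul_assoc, ← rpow_add hcard, sub_add_sub_cancel', sub_self, rpow_zero, one_mul]

theorem sum_norm_rpow_eq_card_rpow_mul_norm_sum_rpow_iff {ι E : Type*} [NormedAddCommGroup E]
    [NormedSpace ℝ E] [StrictConvexSpace ℝ E] {q : ℝ} (hq : 1 < q) {s : Finset ι}
    (hs : s.Nonempty) (f : ι → E) :
    ∑ i ∈ s, ‖f i‖ ^ q = (s.card : ℝ) ^ (1 - q) * ‖∑ i ∈ s, f i‖ ^ q ↔
      ∀ i ∈ s, f i = (s.card : ℝ)⁻¹ • ∑ j ∈ s, f j := by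
  have hcard : (0 : ℝ) < s.card := mod_cast hs.card_pos
  have jensen_eq_iff := (strictConvexOn_norm_rpow hq).map_sum_eq_iff (t := s) (p := f)
    (w := fun _ => (s.card : ℝ)⁻¹) (fun _ _ => inv_pos.2 hcard)
    (by rw [Finset.sum_const, nsmul_eq_mul, mul_inv_cancel₀ hcard.ne'])
    (fun _ _ => Set.mem_univ _)
  have norm_mean_rpow : ‖(s.card : ℝ)⁻¹ • ∑ i ∈ s, f i‖ ^ q =
      (s.card : ℝ)⁻¹ * ((s.card : ℝ) ^ (1 - q) * ‖∑ i ∈ s, f i‖ ^ q) := by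
    rw [norm_smul, norm_inv, norm_natCast, mul_rpow (inv_nonneg.2 hcard.le) (norm_nonneg _),
      inv_rpow hcard.le, rpow_sub hcard, rpow_one]
    field_simp
  rw [← Finset.smul_sum, ← Finset.smul_sum, norm_mean_rpow, smul_eq_mul,
    mul_right_inj' (inv_ne_zero hcard.ne')] at jensen_eq_iff
  rw [eq_comm, jensen_eq_iff]

theorem tsum_eq_tsum_iff_of_le {α M : Type*} [AddCommGroup M] [PartialOrder M]
    [IsOrderedAddMonoid M] [TopologicalSpace M] [IsTopologicalAddGroup M] [OrderClosedTopology M]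
    {f g : α → M} (hle : ∀ a, f a ≤ g a) (hf : Summable f) (hg : Summable g) :
    ∑' a, g a = ∑' a, f a ↔ ∀ a, g a = f a := by
  refine ⟨fun heq a => ?_, tsum_congr⟩
  by_contra hne
  exact (hf.tsum_lt_tsum hle ((hle a).lt_of_ne' hne) hg).ne' heq

theorem lame_eigenvalue_schatten_bound_general {α E : Type*} {ι : α → Type*}
    [∀ a, Fintype (ι a)] [∀ a, Nonempty (ι a)] [NormedAddCommGroup E] [NormedSpace ℝ E]
    [StrictConvexSpace ℝ E] {q : ℝ} (hq : 1 < q) (f : (a : α) → ι a → E)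
    (hf : Summable fun x : Σ a, ι a => ‖f x.1 x.2‖ ^ q) :
    ∑' a, (Fintype.card (ι a) : ℝ) ^ (1 - q) * ‖∑ i, f a i‖ ^ q
        ≤ ∑' x : Σ a, ι a, ‖f x.1 x.2‖ ^ q ∧
    (∑' x : Σ a, ι a, ‖f x.1 x.2‖ ^ q
        = ∑' a, (Fintype.card (ι a) : ℝ) ^ (1 - q) * ‖∑ i, f a i‖ ^ q ↔
      ∀ a i, f a i = (Fintype.card (ι a) : ℝ)⁻¹ • ∑ j, f a j) := by
  have level_le (a : α) :
      (Fintype.card (ι a) : ℝ) ^ (1 - q) * ‖∑ i, f a i‖ ^ q ≤ ∑ i, ‖f a i‖ ^ q :=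
    card_rpow_mul_norm_sum_rpow_le hq.le Finset.univ_nonempty (f a)
  have level_eq_iff (a : α) :
      ∑ i, ‖f a i‖ ^ q = (Fintype.card (ι a) : ℝ) ^ (1 - q) * ‖∑ i, f a i‖ ^ q ↔
        ∀ i, f a i = (Fintype.card (ι a) : ℝ)⁻¹ • ∑ j, f a j := by
    simpa only [Finset.mem_univ, true_imp_iff, Finset.card_univ] using
      sum_norm_rpow_eq_card_rpow_mul_norm_sum_rpow_iff hq Finset.univ_nonempty (f a)
  have summable_levels : Summable fun a => ∑ i, ‖f a i‖ ^ q := by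
    simpa only [tsum_fintype] using hf.sigma
  have summable_bounds :
      Summable fun a => (Fintype.card (ι a) : ℝ) ^ (1 - q) * ‖∑ i, f a i‖ ^ q :=
    .of_nonneg_of_le (fun a => by positivity) level_le summable_levels
  simp only [hf.tsum_sigma, tsum_fintype]
  refine ⟨summable_bounds.tsum_le_tsum level_le summable_levels, ?_⟩
  rw [tsum_eq_tsum_iff_of_le level_le summable_bounds summable_levels]
  exact forall_congr' level_eq_iff

/-- Let `p > 1` and for each `l ∈ ℕ` let `λ_{1,l}, …, λ_{2l+1,l}` be reals summing to `−1`.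
If the family `|λ_{k,l}|^{2p}` is summable, then
`∑_l ∑_k |λ_{k,l}|^{2p} ≥ ∑_l (2l+1)^{1−2p}`, with equality iff `λ_{k,l} = −1/(2l+1)`
for all `k`, `l`. -/
theorem lame_eigenvalue_schatten_bound
    (p : ℝ) (hp : 1 < p)
    (lam : (l : ℕ) → Fin (2 * l + 1) → ℝ)
    (hsum : ∀ l : ℕ, (∑ k : Fin (2 * l + 1), lam l k) = -1)
    (hsummable : Summable (fun x : Σ l : ℕ, Fin (2 * l + 1) => |lam x.1 x.2| ^ (2 * p))) :
    ((∑' l : ℕ, (2 * (l : ℝ) + 1) ^ (1 - 2 * p))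
        ≤ ∑' x : Σ l : ℕ, Fin (2 * l + 1), |lam x.1 x.2| ^ (2 * p)) ∧
    ((∑' x : Σ l : ℕ, Fin (2 * l + 1), |lam x.1 x.2| ^ (2 * p))
        = (∑' l : ℕ, (2 * (l : ℝ) + 1) ^ (1 - 2 * p)) ↔
      ∀ (l : ℕ) (k : Fin (2 * l + 1)), lam l k = -1 / (2 * (l : ℝ) + 1)) := by
  simpa [hsum, ← norm_eq_abs, ← div_eq_inv_mul, neg_div] using
    lame_eigenvalue_schatten_bound_general (q := 2 * p) (by linarith) lam hsummable
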